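/- For every natural number m, the predicate on pairs (V, V′) of m×m integer matrices asserting 'V and V′ are symmetric, unimodular, and congruent over ℤ' is decidable in the computability-theoretic sense: it is a ComputablePred with respect to the canonical encoding of integer matrices. That is, there exists an algorithm that takes as input two integral, symmetric, unimodular matrices and outputs whether or not they are congruent over ℤ. -/

import Mathlib

open Matrix

theorem int_enc_ofNat (n : ℕ) : Encodable.encode (Int.ofNat n) = 2 * n := by
  rfl
theorem int_enc_negSucc (n : ℕ) : Encodable.encode (Int.negSucc n) = 2 * n + 1 := by
  rfl

theorem pr_toNat : Primrec Int.toNat := by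
  have : Primrec fun z : ℤ => if Encodable.encode z % 2 = 0 then Encodable.encode z / 2 else 0 :=
    Primrec.ite (Primrec.eq.comp (Primrec.nat_mod.comp Primrec.encode (Primrec.const 2)) (Primrec.const 0))
     (Primrec.nat_div.comp Primrec.encode (Primrec.const 2)) (Primrec.const 0)
  refine this.of_eq fun z => ?_
  cases z with
  | ofNat n => rw [int_enc_ofNat]; simp
  | negSucc n => rw [int_enc_negSucc]; simp [show (2 * n + 1) % 2 = 1 by omega]

theorem pr_negToNat : Primrec fun z : ℤ => (-z).toNat := by
  have : Primrec fun z : ℤ => if Encodable.encode z % 2 = 0 then 0 else Encodable.encode z / 2 + 1 :=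
    Primrec.ite (Primrec.eq.comp (Primrec.nat_mod.comp Primrec.encode (Primrec.const 2)) (Primrec.const 0))
     (Primrec.const 0) (Primrec.succ.comp (Primrec.nat_div.comp Primrec.encode (Primrec.const 2)))
  refine this.of_eq fun z => ?_
  cases z with
  | ofNat n => rw [int_enc_ofNat]; simp
  | negSucc n =>
    rw [int_enc_negSucc, if_neg (by omega), Int.neg_negSucc]
    simp; omega

theorem pr_sub : Primrec₂ fun a b : ℕ => (a : ℤ) - b := by
  apply Primrec₂.encode_iff.1
  have : Primrec₂ fun a b : ℕ => if b ≤ a then 2 * (a - b) else 2 * (b - a - 1) + 1 :=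
    Primrec.ite (Primrec.nat_le.comp Primrec.snd Primrec.fst)
      (Primrec.nat_mul.comp (Primrec.const 2) (Primrec.nat_sub.comp Primrec.fst Primrec.snd))
      (Primrec.succ.comp (Primrec.nat_mul.comp (Primrec.const 2)
        (Primrec.nat_sub.comp (Primrec.nat_sub.comp Primrec.snd Primrec.fst) (Primrec.const 1))))
  refine this.of_eq fun a b => ?_
  split_ifs with h
  · rw [show (a : ℤ) - b = Int.ofNat (a - b) by simp; omega, int_enc_ofNat]
  · rw [show (a : ℤ) - b = Int.negSucc (b - a - 1) by omega, int_enc_negSucc]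

section
variable {α : Type*} [Primcodable α]

theorem pr_int_add {f g : α → ℤ} (hf : Primrec f) (hg : Primrec g) :
    Primrec fun x => f x + g x := by
  refine (pr_sub.comp (Primrec.nat_add.comp (pr_toNat.comp hf) (pr_toNat.comp hg))
    (Primrec.nat_add.comp (pr_negToNat.comp hf) (pr_negToNat.comp hg))).of_eq fun x => ?_
  omega

theorem pr_int_mul {f g : α → ℤ} (hf : Primrec f) (hg : Primrec g) :
    Primrec fun x => f x * g x := by
  refine (pr_sub.comp
    (Primrec.nat_add.comp (Primrec.nat_mul.comp (pr_toNat.comp hf) (pr_toNat.comp hg))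
      (Primrec.nat_mul.comp (pr_negToNat.comp hf) (pr_negToNat.comp hg)))
    (Primrec.nat_add.comp (Primrec.nat_mul.comp (pr_toNat.comp hf) (pr_negToNat.comp hg))
      (Primrec.nat_mul.comp (pr_negToNat.comp hf) (pr_toNat.comp hg)))).of_eq fun x => ?_
  push_cast
  have h1 : f x = ((f x).toNat : ℤ) - ((-f x).toNat : ℤ) := by omega
  have h2 : g x = ((g x).toNat : ℤ) - ((-g x).toNat : ℤ) := by omega
  conv_rhs => rw [h1, h2]
  ring

theorem pr_int_sum {ι : Type*} (s : Finset ι) {f : ι → α → ℤ} (hf : ∀ i, Primrec (f i)) :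
    Primrec fun x => ∑ i ∈ s, f i x := by
  classical
  induction s using Finset.induction_on with
  | empty => simpa using Primrec.const 0
  | insert a s ha ih => simpa [Finset.sum_insert ha] using pr_int_add (hf a) ih

theorem pr_int_prod {ι : Type*} (s : Finset ι) {f : ι → α → ℤ} (hf : ∀ i, Primrec (f i)) :
    Primrec fun x => ∏ i ∈ s, f i x := by
  classical
  induction s using Finset.induction_on with
  | empty => simpa using Primrec.const 1
  | insert a s ha ih => simpa [Finset.prod_insert ha] using pr_int_mul (hf a) ih

theorem pr_forall {ι : Type*} (s : Finset ι) {p : ι → α → Prop} (hp : ∀ i, PrimrecPred (p i)) :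
    PrimrecPred fun x => ∀ i ∈ s, p i x := by
  classical
  induction s using Finset.induction_on with
  | empty => exact (Primrec.eq.comp (Primrec.const 0) (Primrec.const 0)).of_eq (by simp)
  | insert a s ha ih => exact ((hp a).and ih).of_eq (by simp)

theorem pr_mem {β : Type*} [Primcodable β] (s : Finset β) {f : α → β} (hf : Primrec f) :
    PrimrecPred fun x => f x ∈ s := by
  have := pr_forall (ι := β) s (p := fun i x => ¬ f x = i)
    (fun i => (Primrec.eq.comp hf (Primrec.const i)).not)
  refine this.not.of_eq fun x => ?_
  simp

abbrev MatF (m : ℕ) := Fin m → Fin m → ℤ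

theorem pr_entry {m : ℕ} {f : α → MatF m} (hf : Primrec f) (i j : Fin m) :
    Primrec fun x => f x i j :=
  Primrec.fin_app.comp (Primrec.fin_app.comp hf (Primrec.const i)) (Primrec.const j)

/-- entrywise primitive recursive matrix function -/
def PrMat {m : ℕ} (f : α → Matrix (Fin m) (Fin m) ℤ) : Prop := ∀ i j, Primrec fun x => f x i j

theorem PrMat.of {m : ℕ} {f : α → MatF m} (hf : Primrec f) : PrMat fun x => Matrix.of (f x) :=
  fun i j => pr_entry hf i j

theorem PrMat.mul {m : ℕ} {f g : α → Matrix (Fin m) (Fin m) ℤ} (hf : PrMat f) (hg : PrMat g) :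
    PrMat fun x => f x * g x := fun i j => by
  simp only [Matrix.mul_apply]
  exact pr_int_sum _ fun k => pr_int_mul (hf i k) (hg k j)

theorem PrMat.transpose {m : ℕ} {f : α → Matrix (Fin m) (Fin m) ℤ} (hf : PrMat f) :
    PrMat fun x => (f x)ᵀ := fun i j => hf j i

theorem PrMat.eq {m : ℕ} {f g : α → Matrix (Fin m) (Fin m) ℤ} (hf : PrMat f) (hg : PrMat g) :
    PrimrecPred fun x => f x = g x := by
  refine (pr_forall Finset.univ fun i => pr_forall Finset.univ fun j =>
    Primrec.eq.comp (hf i j) (hg i j)).of_eq fun x => ?_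
  simp [← Matrix.ext_iff]

theorem PrMat.isUnit_det {m : ℕ} {f : α → Matrix (Fin m) (Fin m) ℤ} (hf : PrMat f) :
    PrimrecPred fun x => IsUnit (f x).det := by
  have h : Primrec fun x => (f x).det := by
    simp only [Matrix.det_apply']
    exact pr_int_sum _ fun σ => pr_int_mul (Primrec.const _) (pr_int_prod _ fun i => hf _ _)
  refine ((Primrec.eq.comp h (Primrec.const 1)).or
    (Primrec.eq.comp h (Primrec.const (-1)))).of_eq fun x => ?_
  rw [Int.isUnit_iff]

end

theorem re_exists {α β : Type*} [Primcodable α] [Primcodable β] {p : α → β → Prop}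
    (hp : PrimrecPred fun x : α × β => p x.1 x.2) : REPred fun a => ∃ b, p a b := by
  classical
  have h1 : Computable₂ fun (a : α) (n : ℕ) =>
      ((Encodable.decode n : Option β).bind fun b => if p a b then some () else none) := by
    apply Primrec.to_comp
    refine Primrec.option_bind (Primrec.decode.comp Primrec.snd) ?_
    refine Primrec.ite ?_ (Primrec.const _) (Primrec.const _)
    exact hp.comp (Primrec.pair (Primrec.fst.comp Primrec.fst) Primrec.snd)
  refine (Partrec.rfindOpt h1).dom_re.of_eq fun a => ?_
  rw [Nat.rfindOpt_dom]
  constructor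
  · rintro ⟨n, u, h⟩
    obtain ⟨b, _, h⟩ := Option.bind_eq_some_iff.1 h
    by_cases hb : p a b
    · exact ⟨b, hb⟩
    · simp [hb] at h
  · rintro ⟨b, h⟩
    exact ⟨Encodable.encode b, (), by simp [h]⟩

def Cong {m : Type*} [Fintype m] [DecidableEq m] (A B : Matrix m m ℤ) : Prop :=
  ∃ P : Matrix m m ℤ, IsUnit P.det ∧ B = Pᵀ * A * P

section
variable {m : Type*} [Fintype m] [DecidableEq m]
theorem Cong.refl (A : Matrix m m ℤ) : Cong A A := ⟨1, by simp, by simp⟩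
theorem Cong.trans {A B C : Matrix m m ℤ} (h : Cong A B) (h' : Cong B C) : Cong A C := by
  obtain ⟨P, hP, rfl⟩ := h
  obtain ⟨Q, hQ, rfl⟩ := h'
  exact ⟨P * Q, by rw [det_mul]; exact hP.mul hQ, by simp [Matrix.mul_assoc]⟩
theorem Cong.symm {A B : Matrix m m ℤ} (h : Cong A B) : Cong B A := by
  obtain ⟨P, hP, rfl⟩ := h
  refine ⟨P⁻¹, by rwa [Matrix.isUnit_nonsing_inv_det_iff], ?_⟩
  have h1 : P * P⁻¹ = 1 := Matrix.mul_nonsing_inv _ hP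
  have h2 : (P⁻¹)ᵀ * Pᵀ = 1 := by rw [← transpose_mul, h1, transpose_one]
  calc A = ((P⁻¹)ᵀ * Pᵀ) * A * (P * P⁻¹) := by rw [h1, h2]; simp
    _ = _ := by simp only [Matrix.mul_assoc]
end

theorem final (m : ℕ) (R : Finset (MatF m))
    (hR : ∀ A : Matrix (Fin m) (Fin m) ℤ, A.IsSymm → IsUnit A.det → ∃ S ∈ R, Cong A (Matrix.of S)) :
    ComputablePred fun p : (Fin m → Fin m → ℤ) × (Fin m → Fin m → ℤ) =>
      (Matrix.of p.1).IsSymm ∧ (Matrix.of p.2).IsSymm ∧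
      IsUnit (Matrix.of p.1).det ∧ IsUnit (Matrix.of p.2).det ∧
      ∃ P : Matrix (Fin m) (Fin m) ℤ, IsUnit P.det ∧
        Matrix.of p.2 = Pᵀ * Matrix.of p.1 * P := by
  classical
  rw [ComputablePred.computable_iff_re_compl_re']
  constructor
  · refine (re_exists (β := MatF m) (p := fun p P => (Matrix.of p.1).IsSymm ∧ (Matrix.of p.2).IsSymm ∧
      IsUnit (Matrix.of p.1).det ∧ IsUnit (Matrix.of p.2).det ∧ IsUnit (Matrix.of P).det ∧
        Matrix.of p.2 = (Matrix.of P)ᵀ * Matrix.of p.1 * Matrix.of P) ?_).of_eq ?_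
    · have a1 : PrMat fun x : (MatF m × MatF m) × MatF m => Matrix.of x.1.1 :=
        PrMat.of (Primrec.fst.comp Primrec.fst)
      have a2 : PrMat fun x : (MatF m × MatF m) × MatF m => Matrix.of x.1.2 :=
        PrMat.of (Primrec.snd.comp Primrec.fst)
      have a3 : PrMat fun x : (MatF m × MatF m) × MatF m => Matrix.of x.2 :=
        PrMat.of Primrec.snd
      exact (a1.transpose.eq a1).and <| (a2.transpose.eq a2).and <| a1.isUnit_det.and <|
        a2.isUnit_det.and <| a3.isUnit_det.and <| a2.eq ((a3.transpose.mul a1).mul a3)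
    · intro p
      constructor
      · rintro ⟨P, h1, h2, h3, h4, h5, h6⟩
        exact ⟨h1, h2, h3, h4, _, h5, h6⟩
      · rintro ⟨h1, h2, h3, h4, P, h5, h6⟩
        exact ⟨P, h1, h2, h3, h4, h5, h6⟩
  · let F : Finset (MatF m × MatF m) :=
      (R ×ˢ R).filter fun q => ¬ Cong (Matrix.of q.1) (Matrix.of q.2)
    refine (re_exists (β := (MatF m × MatF m) × (MatF m × MatF m)) (p := fun p w =>
      (¬ ((Matrix.of p.1)ᵀ = Matrix.of p.1 ∧ (Matrix.of p.2)ᵀ = Matrix.of p.2 ∧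
      IsUnit (Matrix.of p.1).det ∧ IsUnit (Matrix.of p.2).det)) ∨
      (w.1 ∈ F ∧ IsUnit (Matrix.of w.2.1).det ∧ IsUnit (Matrix.of w.2.2).det ∧
       Matrix.of w.1.1 = (Matrix.of w.2.1)ᵀ * Matrix.of p.1 * Matrix.of w.2.1 ∧
       Matrix.of w.1.2 = (Matrix.of w.2.2)ᵀ * Matrix.of p.2 * Matrix.of w.2.2)) ?_).of_eq ?_
    · have a1 : PrMat fun x : (MatF m × MatF m) × ((MatF m × MatF m) × (MatF m × MatF m)) =>
          Matrix.of x.1.1 := PrMat.of (Primrec.fst.comp Primrec.fst)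
      have a2 : PrMat fun x : (MatF m × MatF m) × ((MatF m × MatF m) × (MatF m × MatF m)) =>
          Matrix.of x.1.2 := PrMat.of (Primrec.snd.comp Primrec.fst)
      have b1 : PrMat fun x : (MatF m × MatF m) × ((MatF m × MatF m) × (MatF m × MatF m)) =>
          Matrix.of x.2.1.1 := PrMat.of (Primrec.fst.comp (Primrec.fst.comp Primrec.snd))
      have b2 : PrMat fun x : (MatF m × MatF m) × ((MatF m × MatF m) × (MatF m × MatF m)) =>
          Matrix.of x.2.1.2 := PrMat.of (Primrec.snd.comp (Primrec.fst.comp Primrec.snd))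
      have c1 : PrMat fun x : (MatF m × MatF m) × ((MatF m × MatF m) × (MatF m × MatF m)) =>
          Matrix.of x.2.2.1 := PrMat.of (Primrec.fst.comp (Primrec.snd.comp Primrec.snd))
      have c2 : PrMat fun x : (MatF m × MatF m) × ((MatF m × MatF m) × (MatF m × MatF m)) =>
          Matrix.of x.2.2.2 := PrMat.of (Primrec.snd.comp (Primrec.snd.comp Primrec.snd))
      refine PrimrecPred.or (PrimrecPred.not ?_) ?_
      · exact (a1.transpose.eq a1).and <| (a2.transpose.eq a2).and <| a1.isUnit_det.and a2.isUnit_det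
      · exact (pr_mem F (Primrec.fst.comp Primrec.snd)).and <| c1.isUnit_det.and <|
          c2.isUnit_det.and <| (b1.eq ((c1.transpose.mul a1).mul c1)).and
          (b2.eq ((c2.transpose.mul a2).mul c2))
    · intro p
      constructor
      · rintro ⟨w, h | ⟨hF, h1, h2, h3, h4⟩⟩ ⟨g1, g2, g3, g4, g5⟩
        · exact h ⟨g1, g2, g3, g4⟩
        · refine (Finset.mem_filter.1 hF).2 ?_
          exact (Cong.symm ⟨_, h1, h3⟩).trans (Cong.trans g5 ⟨_, h2, h4⟩)
      · intro h
        by_cases hg : ((Matrix.of p.1)ᵀ = Matrix.of p.1 ∧ (Matrix.of p.2)ᵀ = Matrix.of p.2 ∧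
          IsUnit (Matrix.of p.1).det ∧ IsUnit (Matrix.of p.2).det)
        · obtain ⟨g1, g2, g3, g4⟩ := hg
          obtain ⟨S, hS, P, hP, e⟩ := hR _ g1 g3
          obtain ⟨S', hS', P', hP', e'⟩ := hR _ g2 g4
          refine ⟨((S, S'), (P, P')), Or.inr ⟨?_, hP, hP', e, e'⟩⟩
          refine Finset.mem_filter.2 ⟨Finset.mk_mem_product hS hS', fun hc => h ⟨g1, g2, g3, g4, ?_⟩⟩
          exact (Cong.trans ⟨P, hP, e⟩ hc).trans (Cong.symm ⟨P', hP', e'⟩)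
        · exact ⟨((0, 0), (0, 0)), Or.inl hg⟩

section
attribute [-simp] zsmul_eq_mul zsmul_one
variable {ι κ : Type} [Fintype ι] [DecidableEq ι] [Fintype κ] [DecidableEq κ]

theorem Cong.symmetric {A B : Matrix ι ι ℤ} (h : Cong A B) (hA : A.IsSymm) : B.IsSymm := by
  obtain ⟨P, hP, rfl⟩ := h
  unfold Matrix.IsSymm at *
  simp [transpose_mul, hA, Matrix.mul_assoc]

theorem Cong.natAbs_det {A B : Matrix ι ι ℤ} (h : Cong A B) : B.det.natAbs = A.det.natAbs := by
  obtain ⟨P, hP, rfl⟩ := h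
  have := Int.isUnit_iff_natAbs_eq.1 hP
  simp [det_mul, Int.natAbs_mul, this]

theorem Cong.det_ne {A B : Matrix ι ι ℤ} (h : Cong A B) (hA : A.det ≠ 0) : B.det ≠ 0 := by
  rw [← Int.natAbs_ne_zero] at *
  rwa [h.natAbs_det]

theorem Cong.submatrix {A B : Matrix ι ι ℤ} (h : Cong A B) (e : κ ≃ ι) :
    Cong (A.submatrix e e) (B.submatrix e e) := by
  obtain ⟨P, hP, rfl⟩ := h
  refine ⟨P.submatrix e e, by rwa [det_submatrix_equiv_self], ?_⟩
  rw [transpose_submatrix, submatrix_mul_equiv, submatrix_mul_equiv]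

theorem cong_perm (A : Matrix ι ι ℤ) (σ : Equiv.Perm ι) : Cong A (A.submatrix σ σ) := by
  refine ⟨(1 : Matrix ι ι ℤ).submatrix id σ, ?_, ?_⟩
  · rw [det_permute']
    simp
  · ext i j
    simp [Matrix.mul_apply, Matrix.one_apply]

theorem min_diag (A : Matrix ι ι ℤ) (i0 : ι) :
    ∃ B, Cong A B ∧ ∀ B', Cong A B' → ∀ j, (B i0 i0).natAbs ≤ (B' j j).natAbs := by
  classical
  have hex : ∃ n : ℕ, ∃ B, Cong A B ∧ ∃ j, (B j j).natAbs = n := ⟨_, A, Cong.refl A, i0, rfl⟩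
  obtain ⟨B, hB, j, hj⟩ := Nat.find_spec hex
  refine ⟨B.submatrix (Equiv.swap i0 j) (Equiv.swap i0 j), hB.trans (cong_perm _ _), ?_⟩
  intro B' hB' k
  simp only [submatrix_apply, Equiv.swap_apply_left]
  rw [hj]
  exact Nat.find_min' hex ⟨B', hB', k, rfl⟩

/-- bordered matrix -/
def blk (a : ℤ) (b : Matrix Unit κ ℤ) (C : Matrix κ κ ℤ) : Matrix (Unit ⊕ κ) (Unit ⊕ κ) ℤ :=
  fromBlocks (a • (1 : Matrix Unit Unit ℤ)) b bᵀ C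

theorem blk_exists (M : Matrix (Unit ⊕ κ) (Unit ⊕ κ) ℤ) (hM : M.IsSymm) :
    ∃ a b C, C.IsSymm ∧ M = blk a b C := by
  refine ⟨M (Sum.inl ()) (Sum.inl ()), M.toBlocks₁₂, M.toBlocks₂₂, ?_, ?_⟩
  · ext i j
    exact hM.apply _ _
  · ext i j
    rcases i with i | i <;> rcases j with j | j <;> simp [blk, toBlocks₁₂, toBlocks₂₂]
    exact hM.apply _ _

theorem blk_cong (a : ℤ) (b : Matrix Unit κ ℤ) (C : Matrix κ κ ℤ) {P : Matrix κ κ ℤ}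
    (hP : IsUnit P.det) : Cong (blk a b C) (blk a (b * P) (Pᵀ * C * P)) := by
  refine ⟨fromBlocks 1 0 0 P, by simpa [det_fromBlocks_zero₂₁] using hP, ?_⟩
  simp [blk, fromBlocks_transpose, fromBlocks_multiply]

theorem blk_shift (a : ℤ) (b : Matrix Unit κ ℤ) (C : Matrix κ κ ℤ) (t : Matrix Unit κ ℤ) :
    Cong (blk a b C) (blk a (b + a • t) (C + bᵀ * t + tᵀ * b + a • (tᵀ * t))) := by
  refine ⟨fromBlocks 1 t 0 1, by simp [det_fromBlocks_zero₂₁], ?_⟩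
  simp only [blk, fromBlocks_transpose, fromBlocks_multiply]
  congr 1
  · simp
  · simp [add_comm]
  · simp [add_comm]
  · simp [Matrix.add_mul]
    abel

theorem blk_det (a : ℤ) (b : Matrix Unit κ ℤ) (C : Matrix κ κ ℤ) :
    (blk a b C).det * a ^ Fintype.card κ = a * (a • C - bᵀ * b).det := by
  have h : blk a b C * fromBlocks 1 (-b) 0 (a • 1) =
      fromBlocks (a • (1 : Matrix Unit Unit ℤ)) 0 bᵀ (a • C - bᵀ * b) := by
    rw [blk, fromBlocks_multiply]
    congr 1
    · simp
    · simp
    · simp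
    · simp; abel
  have h2 := congrArg det h
  rw [det_mul, det_fromBlocks_zero₂₁, det_fromBlocks_zero₁₂] at h2
  simpa [det_smul] using h2

theorem round_ex (a b : ℤ) (ha : a ≠ 0) : ∃ t : ℤ, 2 * (b + a * t).natAbs ≤ a.natAbs := by
  have h1 := Int.emod_add_mul_ediv b a
  have h2 := Int.emod_nonneg b ha
  have h3 := Int.emod_lt_abs b ha
  by_cases h : 2 * (b % a) ≤ |a|
  · refine ⟨-(b / a), ?_⟩
    rw [Int.abs_eq_natAbs] at h
    rw [show b + a * -(b / a) = b % a by linarith]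
    omega
  · rcases abs_cases a with ⟨h4, _⟩ | ⟨h4, _⟩
    · refine ⟨-(b / a) - 1, ?_⟩
      rw [show b + a * (-(b / a) - 1) = b % a - a by linarith]
      omega
    · refine ⟨-(b / a) + 1, ?_⟩
      rw [show b + a * (-(b / a) + 1) = b % a + a by linarith]
      omega

theorem blk_step (a : ℤ) (ha : a ≠ 0) (b : Matrix Unit κ ℤ) (C : Matrix κ κ ℤ) (S' : Matrix κ κ ℤ)
    (h : Cong (a • C - bᵀ * b) S') :
    ∃ b' C', Cong (blk a b C) (blk a b' C') ∧ a • C' - b'ᵀ * b' = S' ∧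
      ∀ j, 2 * (b' () j).natAbs ≤ a.natAbs := by
  obtain ⟨P, hP, rfl⟩ := h
  choose t ht using fun j => round_ex a ((b * P) () j) ha
  let T : Matrix Unit κ ℤ := Matrix.of fun _ j => t j
  refine ⟨_, _, (blk_cong a b C hP).trans (blk_shift _ _ _ T), ?_, ?_⟩
  · simp only [transpose_add, transpose_smul, Matrix.add_mul, Matrix.mul_add, smul_add,
      Matrix.smul_mul, Matrix.mul_smul, transpose_mul, Matrix.mul_sub, Matrix.sub_mul,
      Matrix.mul_assoc]
    abel
  · intro j
    simpa [T] using ht j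

def Herm (ι : Type) [Fintype ι] [DecidableEq ι] : Prop :=
  ∃ C : ℕ, ∀ A : Matrix ι ι ℤ, A.IsSymm → A.det ≠ 0 → ∃ B, Cong A B ∧ ∃ i,
    (B i i).natAbs ^ Fintype.card ι ≤ C * A.det.natAbs

theorem Herm.equiv (e : ι ≃ κ) (h : Herm ι) : Herm κ := by
  obtain ⟨C, hC⟩ := h
  refine ⟨C, fun A hA hd => ?_⟩
  obtain ⟨B, hB, i, hi⟩ := hC (A.submatrix e e) (hA.submatrix e) (by rwa [det_submatrix_equiv_self])
  rw [det_submatrix_equiv_self, Fintype.card_congr e] at hi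
  refine ⟨B.submatrix e.symm e.symm, ?_, e i, by simpa using hi⟩
  simpa using hB.submatrix e.symm

theorem schur_det (k : ℕ) (hk : Fintype.card κ = k + 1) (a : ℤ) (ha : a ≠ 0)
    (b : Matrix Unit κ ℤ) (C : Matrix κ κ ℤ) :
    (a • C - bᵀ * b).det = (blk a b C).det * a ^ k := by
  have := blk_det a b C
  rw [hk] at this
  apply mul_left_cancel₀ ha
  rw [← this]; ring

theorem schur_symm (a : ℤ) (b : Matrix Unit κ ℤ) (C : Matrix κ κ ℤ) (hC : C.IsSymm) :
    (a • C - bᵀ * b).IsSymm := by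
  unfold Matrix.IsSymm at *
  simp [hC]

theorem Herm.succ (k : ℕ) (hk : Fintype.card κ = k + 1) (h : Herm κ) : Herm (Unit ⊕ κ) := by
  obtain ⟨K, hK⟩ := h
  refine ⟨4 ^ (k + 1) * K, fun A hA hd => ?_⟩
  obtain ⟨M, hM, hmin⟩ := min_diag A (Sum.inl ())
  refine ⟨M, hM, Sum.inl (), ?_⟩
  obtain ⟨a, b, C, hC, rfl⟩ := blk_exists M (hM.symmetric hA)
  have h00 : ∀ b C, (blk a b C : Matrix (Unit ⊕ κ) (Unit ⊕ κ) ℤ) (Sum.inl ()) (Sum.inl ()) = a := by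
    intros; simp [blk]
  rw [h00] at *
  rw [← hM.natAbs_det]
  have hd' := hM.det_ne hd
  by_cases ha : a = 0
  · simp [ha]
  obtain ⟨S', hS', i, hi⟩ := hK _ (schur_symm a b C hC) (by
    rw [schur_det k hk a ha]; exact mul_ne_zero hd' (pow_ne_zero _ ha))
  obtain ⟨b', C', h1, h2, h3⟩ := blk_step a ha b C S' hS'
  have h4 := hmin _ (hM.trans h1) (Sum.inr i)
  simp only [blk, fromBlocks_apply₂₂] at h4
  have h5 : a * C' i i - b' () i * b' () i = S' i i := by
    rw [← h2]; simp [Matrix.mul_apply]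
  have h6 := h3 i
  rw [schur_det k hk a ha, hk, Int.natAbs_mul, Int.natAbs_pow] at hi
  have h7 : 3 * (a.natAbs * a.natAbs) ≤ 4 * (S' i i).natAbs := by
    have e1 : (a * C' i i).natAbs ≤ (S' i i).natAbs + (b' () i * b' () i).natAbs := by omega
    rw [Int.natAbs_mul, Int.natAbs_mul] at e1
    nlinarith [Nat.mul_le_mul h6 h6, Nat.mul_le_mul_left a.natAbs h4]
  have hpos : 0 < a.natAbs := Int.natAbs_pos.2 ha
  have hcard : Fintype.card (Unit ⊕ κ) = k + 2 := by simp [hk]; omega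
  rw [hcard]
  generalize (blk a b C).det.natAbs = d at *
  generalize a.natAbs = m at *
  generalize (S' i i).natAbs = s at *
  have h8 : (m * m) ^ (k + 1) ≤ (4 * s) ^ (k + 1) := Nat.pow_le_pow_left (by omega) _
  have h9 : m ^ k * m ^ (k + 2) ≤ m ^ k * (4 ^ (k + 1) * K * d) := by
    calc m ^ k * m ^ (k + 2) = (m * m) ^ (k + 1) := by ring
      _ ≤ (4 * s) ^ (k + 1) := h8
      _ = 4 ^ (k + 1) * s ^ (k + 1) := by rw [mul_pow]
      _ ≤ 4 ^ (k + 1) * (K * (d * m ^ k)) := Nat.mul_le_mul_left _ hi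
      _ = _ := by ring
  exact Nat.le_of_mul_le_mul_left h9 (by positivity)

def finEquiv (n : ℕ) : Unit ⊕ Fin n ≃ Fin (n + 1) :=
  (Equiv.sumComm _ _).trans (((Equiv.refl _).sumCongr finOneEquiv.symm).trans finSumFinEquiv)

theorem herm_all : ∀ n, Herm (Fin (n + 1))
  | 0 => ⟨1, fun A _ _ => ⟨A, Cong.refl A, 0, by simp⟩⟩
  | n + 1 => (Herm.succ n (by simp) (herm_all n)).equiv (finEquiv _)

theorem upd_transv (b : ι → ℤ) (i j : ι) (c : ℤ) :
    b ᵥ* (transvection i j c) = Function.update b j (b j + c * b i) := by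
  ext k
  by_cases h : k = j
  · subst h
    simp [transvection, vecMul, dotProduct, Matrix.add_apply, mul_add, Finset.sum_add_distrib,
      Matrix.one_apply, Matrix.single_apply, mul_comm]
  · simp [transvection, vecMul, dotProduct, Matrix.add_apply, mul_add, Finset.sum_add_distrib,
      Matrix.one_apply, Matrix.single_apply, h, Ne.symm h]

theorem sum_upd (b : ι → ℤ) (j : ι) (x : ℤ) :
    ∑ i, (Function.update b j x i).natAbs + (b j).natAbs = ∑ i, (b i).natAbs + x.natAbs := by
  rw [← Finset.add_sum_erase _ _ (Finset.mem_univ j),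
    ← Finset.add_sum_erase Finset.univ (fun i => (b i).natAbs) (Finset.mem_univ j)]
  have : ∑ i ∈ Finset.univ.erase j, (Function.update b j x i).natAbs
      = ∑ i ∈ Finset.univ.erase j, (b i).natAbs := by
    apply Finset.sum_congr rfl
    intro i hi
    rw [Function.update_of_ne (Finset.ne_of_mem_erase hi)]
  rw [this]
  simp
  omega

theorem vec_red (i0 : ι) : ∀ (N : ℕ) (b : ι → ℤ),
    2 * ∑ i, (b i).natAbs + (if b i0 = 0 then 1 else 0) ≤ N →
    ∃ P : Matrix ι ι ℤ, IsUnit P.det ∧ ∀ j, j ≠ i0 → (b ᵥ* P) j = 0 := by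
  intro N
  induction N using Nat.strong_induction_on with
  | _ N ih =>
  intro b hN
  by_cases hall : ∀ j, j ≠ i0 → b j = 0
  · exact ⟨1, by simp, by simpa using hall⟩
  push Not at hall
  obtain ⟨j, hj, hbj⟩ := hall
  have comb : ∀ Q : Matrix ι ι ℤ, IsUnit Q.det →
      2 * ∑ i, ((b ᵥ* Q) i).natAbs + (if (b ᵥ* Q) i0 = 0 then 1 else 0) < N →
      ∃ P : Matrix ι ι ℤ, IsUnit P.det ∧ ∀ j, j ≠ i0 → (b ᵥ* P) j = 0 := by
    intro Q hQ hlt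
    obtain ⟨P, hP, h⟩ := ih _ hlt _ le_rfl
    refine ⟨Q * P, by rw [det_mul]; exact hQ.mul hP, fun j hj => ?_⟩
    rw [← vecMul_vecMul]; exact h j hj
  have key : ∀ x y : ℤ, y ≠ 0 → y.natAbs ≤ x.natAbs → (x + -(x / y) * y).natAbs < x.natAbs := by
    intro x y hy hxy
    have h1 := Int.emod_add_mul_ediv x y
    have h2 := Int.emod_nonneg x hy
    have h3 := Int.emod_lt_abs x hy
    rw [show x + -(x / y) * y = x % y by linarith]
    rw [Int.abs_eq_natAbs] at h3
    omega
  by_cases h0 : b i0 = 0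
  · refine comb (transvection j i0 1 * transvection i0 j (-1)) ?_ ?_
    · rw [det_mul, det_transvection_of_ne _ _ hj, det_transvection_of_ne _ _ hj.symm]; simp
    · rw [← vecMul_vecMul, upd_transv, upd_transv]
      have e1 := sum_upd b i0 (b i0 + 1 * b j)
      have e2 := sum_upd (Function.update b i0 (b i0 + 1 * b j)) j
        (Function.update b i0 (b i0 + 1 * b j) j + -1 * Function.update b i0 (b i0 + 1 * b j) i0)
      rw [if_pos h0] at hN
      rw [if_neg (by simp [Function.update_of_ne hj.symm, h0, hbj])]
      simp [h0, Function.update_of_ne hj] at e1 e2 ⊢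
      omega
  · by_cases hle : (b i0).natAbs ≤ (b j).natAbs
    · refine comb (transvection i0 j (-(b j / b i0))) ?_ ?_
      · rw [det_transvection_of_ne _ _ hj.symm]; simp
      · rw [upd_transv]
        have e1 := sum_upd b j (b j + -(b j / b i0) * b i0)
        have e2 := key _ _ h0 hle
        split_ifs <;> omega
    · refine comb (transvection j i0 (-(b i0 / b j))) ?_ ?_
      · rw [det_transvection_of_ne _ _ hj]; simp
      · rw [upd_transv]
        have e1 := sum_upd b i0 (b i0 + -(b i0 / b j) * b j)
        have e2 := key (b i0) (b j) hbj (by omega)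
        split_ifs <;> omega

def Red (ι : Type) [Fintype ι] [DecidableEq ι] : Prop :=
  ∀ D : ℕ, ∃ N : ℕ, ∀ A : Matrix ι ι ℤ, A.IsSymm → A.det ≠ 0 → A.det.natAbs ≤ D →
    ∃ B, Cong A B ∧ ∀ i j, (B i j).natAbs ≤ N

theorem Red.equiv (e : ι ≃ κ) (h : Red ι) : Red κ := by
  intro D
  obtain ⟨C, hC⟩ := h D
  refine ⟨C, fun A hA hd hD => ?_⟩
  obtain ⟨B, hB, hi⟩ := hC (A.submatrix e e) (hA.submatrix e) (by rwa [det_submatrix_equiv_self])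
    (by rwa [det_submatrix_equiv_self])
  refine ⟨B.submatrix e.symm e.symm, ?_, fun i j => by simpa using hi _ _⟩
  simpa using hB.submatrix e.symm

theorem det_iso (g c : ℤ) (u : Matrix Unit κ ℤ) (C : Matrix κ κ ℤ) :
    (blk 0 (fromCols (g • (1 : Matrix Unit Unit ℤ)) 0) (blk c u C)).det.natAbs
      = g.natAbs * (g.natAbs * C.det.natAbs) := by
  have h := det_permute (Equiv.swap (Sum.inl ()) (Sum.inr (Sum.inl ())))
    (blk 0 (fromCols (g • (1 : Matrix Unit Unit ℤ)) 0) (blk c u C))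
  have h2 : (blk 0 (fromCols (g • (1 : Matrix Unit Unit ℤ)) 0) (blk c u C)).submatrix
      (Equiv.swap (Sum.inl ()) (Sum.inr (Sum.inl ()))) id
      = fromBlocks (g • (1 : Matrix Unit Unit ℤ)) (fromCols (c • (1 : Matrix Unit Unit ℤ)) u) 0
        (fromBlocks (g • (1 : Matrix Unit Unit ℤ)) 0 uᵀ C) := by
    ext i j
    rcases i with i | i | i <;> rcases j with j | j | j <;> simp [blk, Equiv.swap_apply_of_ne_of_ne]
  rw [h2, det_fromBlocks_zero₂₁, det_fromBlocks_zero₁₂] at h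
  have h3 := congrArg Int.natAbs h
  simp [Int.natAbs_mul] at h3
  exact h3.symm

/-- isotropic case -/
theorem iso_case (hr : Red κ) (D : ℕ) : ∃ N : ℕ, ∀ (b : Matrix Unit (Unit ⊕ κ) ℤ)
    (C : Matrix (Unit ⊕ κ) (Unit ⊕ κ) ℤ), C.IsSymm → (blk 0 b C).det ≠ 0 →
    (blk 0 b C).det.natAbs ≤ D →
    ∃ B, Cong (blk 0 b C) B ∧ ∀ i j, (B i j).natAbs ≤ N := by
  obtain ⟨N, hN⟩ := hr D
  refine ⟨N + D, fun b C hC hd hD => ?_⟩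
  obtain ⟨P, hP, hPb⟩ := vec_red (Sum.inl () : Unit ⊕ κ) _ (b ()) le_rfl
  have hc1 := blk_cong 0 b C hP
  obtain ⟨c, u, E, hE, hCe⟩ := blk_exists (Pᵀ * C * P)
    (Cong.symmetric ⟨P, hP, rfl⟩ hC)
  obtain ⟨g, hg⟩ : ∃ g, b * P = fromCols (g • (1 : Matrix Unit Unit ℤ)) 0 := by
    refine ⟨(b () ᵥ* P) (Sum.inl ()), ?_⟩
    ext i j
    rcases j with j | j
    · simp [Matrix.mul_apply, vecMul, dotProduct]
    · have := hPb (Sum.inr j) (by simp)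
      simpa [Matrix.mul_apply, vecMul, dotProduct] using this
  rw [hg, hCe] at hc1
  have hdet := hc1.natAbs_det
  rw [det_iso] at hdet
  have hd0 : (blk 0 b C).det.natAbs ≠ 0 := Int.natAbs_ne_zero.2 hd
  rw [← hdet] at hd0 hD
  have hg0 : 0 < g.natAbs := by
    rcases Nat.eq_zero_or_pos g.natAbs with h | h
    · simp [h] at hd0
    · exact h
  have hE0 : 0 < E.det.natAbs := by
    rcases Nat.eq_zero_or_pos E.det.natAbs with h | h
    · simp [h] at hd0
    · exact h
  have hgD : g.natAbs ≤ D := by nlinarith [Nat.mul_pos hg0 hE0]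
  have hED : E.det.natAbs ≤ D := by nlinarith [Nat.mul_pos hg0 hE0]
  obtain ⟨E', ⟨Q, hQ, rfl⟩, hE'⟩ := hN E hE (by omega) hED
  have hc2 : Cong (blk 0 (fromCols (g • (1 : Matrix Unit Unit ℤ)) 0) (blk c u E))
      (blk 0 (fromCols (g • (1 : Matrix Unit Unit ℤ)) 0) (blk c (u * Q) (Qᵀ * E * Q))) := by
    have := blk_cong 0 (fromCols (g • (1 : Matrix Unit Unit ℤ)) 0) (blk c u E)
      (P := fromBlocks 1 0 0 Q) (by simpa [det_fromBlocks_zero₂₁] using hQ)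
    convert this using 2
    · ext i j
      rcases j with j | j <;> simp [Matrix.mul_apply, Fintype.sum_sum_type]
    · simp [blk, fromBlocks_transpose, fromBlocks_multiply]
  have hgz : g ≠ 0 := by omega
  generalize hE'' : Qᵀ * E * Q = E'' at *
  generalize u * Q = u' at *
  choose t ht using fun j => round_ex g (u' () j) hgz
  obtain ⟨s, hs⟩ := round_ex (2 * g) c (by omega)
  let T : Matrix Unit (Unit ⊕ κ) ℤ := Matrix.of fun _ => Sum.elim (fun _ => s) t
  refine ⟨_, hc1.trans (hc2.trans (blk_shift _ _ _ T)), ?_⟩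
  intro i j
  rcases i with i | i | i <;> rcases j with j | j | j <;> 
    simp [blk, Matrix.mul_apply, T]
  · omega
  · omega
  · rw [show c + g * s + g * s = c + 2 * g * s by ring]
    omega
  · have := ht j
    change (u' () j + g * t j).natAbs ≤ _
    omega
  · have := ht i
    change (u' () i + g * t i).natAbs ≤ _
    omega
  · have := hE' i j
    omega

theorem noniso_case (k : ℕ) (hk : Fintype.card κ = k + 1) (hr : Red κ) (D m : ℕ) :
    ∃ N : ℕ, ∀ (a : ℤ) (b : Matrix Unit κ ℤ)
    (C : Matrix κ κ ℤ), a ≠ 0 → a.natAbs ≤ m → C.IsSymm → (blk a b C).det ≠ 0 →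
    (blk a b C).det.natAbs ≤ D →
    ∃ B, Cong (blk a b C) B ∧ ∀ i j, (B i j).natAbs ≤ N := by
  obtain ⟨N, hN⟩ := hr (D * m ^ k)
  refine ⟨m + N + m * m, fun a b C ha ham hC hd hD => ?_⟩
  have hdet := schur_det k hk a ha b C
  obtain ⟨S', hS', hb⟩ := hN _ (schur_symm a b C hC)
    (by rw [hdet]; exact mul_ne_zero hd (pow_ne_zero _ ha))
    (by rw [hdet, Int.natAbs_mul, Int.natAbs_pow]
        exact Nat.mul_le_mul hD (Nat.pow_le_pow_left ham _))
  obtain ⟨b', C', h1, h2, h3⟩ := blk_step a ha b C S' hS'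
  refine ⟨_, h1, ?_⟩
  have hpos : 0 < a.natAbs := Int.natAbs_pos.2 ha
  have hbb : ∀ j, (b' () j).natAbs ≤ m := fun j => by have := h3 j; omega
  intro i j
  rcases i with i | i <;> rcases j with j | j <;> simp [blk]
  · omega
  · have := hbb j
    change (b' () j).natAbs ≤ _
    omega
  · have := hbb i
    change (b' () i).natAbs ≤ _
    omega
  · have h5 : a * C' i j - b' () i * b' () j = S' i j := by
      rw [← h2]; simp [Matrix.mul_apply]
    have e1 : (a * C' i j).natAbs ≤ (S' i j).natAbs + (b' () i * b' () j).natAbs := by omega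
    rw [Int.natAbs_mul, Int.natAbs_mul] at e1
    have e2 := Nat.mul_le_mul (hbb i) (hbb j)
    have e3 := hb i j
    nlinarith

theorem Red.succ (k : ℕ) (hk : Fintype.card κ = k + 1) (hh : Herm (Unit ⊕ κ)) (hr : Red κ)
    (hiso : ∀ D : ℕ, ∃ N : ℕ, ∀ (b : Matrix Unit κ ℤ)
    (C : Matrix κ κ ℤ), C.IsSymm → (blk 0 b C).det ≠ 0 →
    (blk 0 b C).det.natAbs ≤ D →
    ∃ B, Cong (blk 0 b C) B ∧ ∀ i j, (B i j).natAbs ≤ N) : Red (Unit ⊕ κ) := by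
  intro D
  obtain ⟨K, hK⟩ := hh
  obtain ⟨N1, hN1⟩ := hiso D
  obtain ⟨N2, hN2⟩ := noniso_case k hk hr D (K * D)
  refine ⟨N1 + N2, fun A hA hd hD => ?_⟩
  obtain ⟨B, hB, i, hi⟩ := hK A hA hd
  have hM := hB.trans (cong_perm B (Equiv.swap (Sum.inl ()) i))
  have hM0 : (B.submatrix (Equiv.swap (Sum.inl ()) i) (Equiv.swap (Sum.inl ()) i))
    (Sum.inl ()) (Sum.inl ()) = B i i := by simp
  generalize B.submatrix (Equiv.swap (Sum.inl ()) i) (Equiv.swap (Sum.inl ()) i) = M at *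
  obtain ⟨a, b, C, hC, rfl⟩ := blk_exists M (hM.symmetric hA)
  have h00 : a = B i i := by rw [← hM0]; simp [blk]
  rw [← h00] at hi
  have hd' := hM.det_ne hd
  have hD' := hM.natAbs_det
  rw [← hD'] at hD
  by_cases ha : a = 0
  · subst ha
    obtain ⟨B', h1, h2⟩ := hN1 b C hC hd' hD
    exact ⟨B', hM.trans h1, fun i j => (h2 i j).trans (by omega)⟩
  · have ham : a.natAbs ≤ K * D := by
      refine (Nat.le_self_pow ?_ _).trans (hi.trans ?_)
      · simp
      · rw [← hD']; exact Nat.mul_le_mul_left _ hD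
    obtain ⟨B', h1, h2⟩ := hN2 a b C ha ham hC hd' hD
    exact ⟨B', hM.trans h1, fun i j => (h2 i j).trans (by omega)⟩

theorem red_all : ∀ n, Red (Fin n)
  | 0 => fun D => ⟨0, fun A _ _ _ => ⟨A, Cong.refl A, fun i => i.elim0⟩⟩
  | 1 => fun D => ⟨D, fun A _ _ hD => ⟨A, Cong.refl A, fun i j => by
      rw [det_fin_one] at hD
      rwa [Subsingleton.elim i 0, Subsingleton.elim j 0]⟩⟩
  | n + 2 => by
    refine Red.equiv (((Equiv.refl Unit).sumCongr (finEquiv n)).trans (finEquiv (n + 1))) ?_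
    refine Red.succ n (by simp; omega) ?_ ((red_all (n + 1)).equiv (finEquiv n).symm)
      (iso_case (red_all n))
    exact (herm_all (n + 1)).equiv
      (((Equiv.refl Unit).sumCongr (finEquiv n)).trans (finEquiv (n + 1))).symm

end

theorem computablePred_congruent (m : ℕ) :
    ComputablePred fun p : (Fin m → Fin m → ℤ) × (Fin m → Fin m → ℤ) =>
      (Matrix.of p.1).IsSymm ∧ (Matrix.of p.2).IsSymm ∧
      IsUnit (Matrix.of p.1).det ∧ IsUnit (Matrix.of p.2).det ∧
      ∃ P : Matrix (Fin m) (Fin m) ℤ, IsUnit P.det ∧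
        Matrix.of p.2 = Pᵀ * Matrix.of p.1 * P := by
  obtain ⟨N, hN⟩ := red_all m 1
  refine final m (Fintype.piFinset fun _ => Fintype.piFinset fun _ => Finset.Icc (-(N : ℤ)) N) ?_
  intro A hA hd
  obtain ⟨B, hB, hb⟩ := hN A hA hd.ne_zero (Int.isUnit_iff_natAbs_eq.1 hd).le
  refine ⟨B, ?_, hB⟩
  refine Fintype.mem_piFinset.2 fun i => Fintype.mem_piFinset.2 fun j => Finset.mem_Icc.2 ?_
  have := hb i j
  omega
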